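/- Let n ≥ 4 be an integer and A > 0 a real constant. For every ε > 0 there exists a constant C = C(n, A, ε) such that the following holds for all real H ≥ 2: for all nonzero integers Q_0, Q_1, …, Q_n with |Q_i| ≤ H^A for i = 0, 1, …, n, the number of n-tuples (x_1, …, x_n) of nonzero integers with |x_i| ≤ H for all i satisfying Σ_{i=1}^n Q_i/x_i = Q_0 is at most C·H^{n/2 − 1/(2n−2) + ε}. -/

import Mathlib

lemma div_bound (ε : ℝ) (hε : 0 < ε) : ∃ C : ℝ, 1 ≤ C ∧ ∀ m : ℕ, m ≠ 0 →
    (m.divisors.card : ℝ) ≤ C * (m : ℝ) ^ ε := by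
  have hl : 0 < Real.log 2 := Real.log_pos (by norm_num)
  set c : ℝ := 1 + 1 / (ε * Real.log 2) with hc
  have hc1 : 1 ≤ c := by rw [hc]; have : 0 < 1 / (ε * Real.log 2) := by positivity
                         linarith
  set N : ℕ := ⌈(2 : ℝ) ^ (1 / ε)⌉₊ with hN
  refine ⟨c ^ N, one_le_pow₀ hc1, ?_⟩
  intro m hm
  have key : ∀ p ∈ m.primeFactors, ((m.factorization p + 1 : ℕ) : ℝ) ≤
      (if p < N then c else 1) * ((p ^ m.factorization p : ℕ) : ℝ) ^ ε := by
    intro p hp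
    have hp2 : 2 ≤ p := (Nat.prime_of_mem_primeFactors hp).two_le
    have hp2' : (2 : ℝ) ≤ p := by exact_mod_cast hp2
    set e := m.factorization p
    have hpe : ((p ^ e : ℕ) : ℝ) ^ ε = ((p : ℝ) ^ ε) ^ e := by
      push_cast
      rw [← Real.rpow_natCast, ← Real.rpow_natCast, ← Real.rpow_mul (by positivity),
        ← Real.rpow_mul (by positivity), mul_comm]
    rw [hpe]
    split_ifs with h
    · have h1 : ((2 : ℝ) ^ ε) ^ e ≤ ((p : ℝ) ^ ε) ^ e := by gcongr
      have h2 : 1 + ε * Real.log 2 * e ≤ ((2 : ℝ) ^ ε) ^ e := by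
        rw [← Real.rpow_natCast, ← Real.rpow_mul (by positivity),
          Real.rpow_def_of_pos (by norm_num)]
        have := Real.add_one_le_exp (Real.log 2 * (ε * e))
        linarith
      have h3 : ((e + 1 : ℕ) : ℝ) ≤ c * (1 + ε * Real.log 2 * e) := by
        have : c * (1 + ε * Real.log 2 * e) =
          1 + e + ε * Real.log 2 * e + 1 / (ε * Real.log 2) := by
          rw [hc]; field_simp; ring
        rw [this]; push_cast
        have a1 : 0 ≤ ε * Real.log 2 * e := by positivity
        have a2 : 0 ≤ 1 / (ε * Real.log 2) := by positivity
        linarith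
      calc _ ≤ _ := h3
        _ ≤ _ := by gcongr; linarith
    · rw [one_mul]
      have h1 : (2 : ℝ) ^ (1 / ε) ≤ p := (Nat.le_ceil _).trans (by exact_mod_cast not_lt.mp h)
      have h2 : (2 : ℝ) ≤ (p : ℝ) ^ ε := by
        calc (2 : ℝ) = ((2 : ℝ) ^ (1 / ε)) ^ ε := by
              rw [← Real.rpow_mul (by norm_num), one_div_mul_cancel hε.ne', Real.rpow_one]
          _ ≤ _ := by gcongr
      calc ((e + 1 : ℕ) : ℝ) ≤ ((2 ^ e : ℕ) : ℝ) := by exact_mod_cast Nat.lt_two_pow_self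
        _ = (2 : ℝ) ^ e := by push_cast; rfl
        _ ≤ _ := by gcongr
  rw [Nat.card_divisors hm]
  push_cast
  calc ∏ x ∈ m.primeFactors, ((m.factorization x : ℝ) + 1)
      ≤ ∏ p ∈ m.primeFactors, ((if p < N then c else 1) *
          ((p ^ m.factorization p : ℕ) : ℝ) ^ ε) := by
        apply Finset.prod_le_prod
        · intros; positivity
        · intro p hp; simpa using key p hp
    _ = (∏ p ∈ m.primeFactors, (if p < N then c else 1)) * (m : ℝ) ^ ε := by
        rw [Finset.prod_mul_distrib, Real.finsetProd_rpow _ _ (by intros; positivity)]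
        congr 2
        rw [← Nat.cast_prod]
        congr 1
        exact Nat.prod_factorization_pow_eq_self hm
    _ ≤ c ^ N * (m : ℝ) ^ ε := by
        gcongr
        rw [Finset.prod_ite]
        simp only [Finset.prod_const, one_pow, mul_one]
        apply pow_le_pow_right₀ hc1
        calc _ ≤ (Finset.range N).card := by
              apply Finset.card_le_card
              intro p hp
              simp at hp ⊢
              exact hp.2
          _ = N := by simp

lemma coprime_part (W : ℕ) (x : ℕ) : 0 < x → ∃ s y m, x = s * y ∧ s ∣ W ^ m ∧ y.Coprime W := by
  induction x using Nat.strong_induction_on with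
  | _ x ih =>
    intro hx
    by_cases h : x.Coprime W
    · exact ⟨1, x, 0, by simp, by simp, h⟩
    · have hd : x.gcd W ≠ 1 := h
      have hd0 : 0 < x.gcd W := Nat.gcd_pos_of_pos_left _ hx
      have hd2 : 1 < x.gcd W := by omega
      obtain ⟨x', hx'⟩ := Nat.gcd_dvd_left x W
      have hx0 : 0 < x' := by
        rcases Nat.eq_zero_or_pos x' with h0 | h0
        · rw [h0] at hx'; omega
        · exact h0
      obtain ⟨s, y, m, h1, h2, h3⟩ := ih x' (by nlinarith) hx0
      refine ⟨x.gcd W * s, y, m + 1, ?_, ?_, h3⟩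
      · rw [mul_assoc, ← h1]; exact hx'
      · rw [pow_succ']; exact mul_dvd_mul (Nat.gcd_dvd_right _ _) h2

lemma kpart (W K : ℕ) (hK : 0 < K) (hW : W ≠ 0) (s : ℕ) : 0 < s → ∀ m, s ∣ W ^ m →
    ∃ t r, s = t ^ K * r ∧ r ∣ W ^ K := by
  induction s using Nat.strong_induction_on with
  | _ s ih =>
    intro hs m hm
    by_cases h : s ∣ W ^ K
    · exact ⟨1, s, by simp, h⟩
    · rw [← Nat.factorization_prime_le_iff_dvd hs.ne' (pow_ne_zero _ hW)] at h
      push Not at h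
      obtain ⟨p, hp, hlt⟩ := h
      rw [Nat.factorization_pow] at hlt
      simp only [Finsupp.smul_apply, smul_eq_mul] at hlt
      have hps : p ∣ s := by
        by_contra hn
        rw [Nat.factorization_eq_zero_of_not_dvd hn] at hlt
        omega
      have hpW : p ∣ W := hp.dvd_of_dvd_pow (hps.trans hm)
      have h1 : 1 ≤ W.factorization p := (hp.dvd_iff_one_le_factorization hW).mp hpW
      have hpk : p ^ K ∣ s := by
        rw [hp.pow_dvd_iff_le_factorization hs.ne']
        nlinarith
      obtain ⟨s', hs'⟩ := hpk
      have h0 : 0 < s' := by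
        rcases Nat.eq_zero_or_pos s' with h0 | h0
        · rw [h0] at hs'; omega
        · exact h0
      have hgt : 1 < p ^ K := Nat.one_lt_pow hK.ne' hp.one_lt
      obtain ⟨t, r, h3, h4⟩ := ih s' (by nlinarith) h0 m ((Dvd.intro_left _ hs'.symm).trans hm)
      exact ⟨p * t, r, by rw [hs', h3]; ring, h4⟩

lemma core_a (M g : ℕ) (hM : 0 < M) (hg : 0 < g)
    (h : ∀ p, p.Prime → p ∣ M → ¬ p ∣ g → p ^ 2 ∣ M) :
    ∃ a, 0 < a ∧ a ^ 2 ≤ M * g ∧ M ∣ a ^ 3 := by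
  obtain ⟨c, b, hbc, hsq⟩ := Nat.sq_mul_squarefree M
  have hb : 0 < b := by
    rcases Nat.eq_zero_or_pos b with h0 | h0
    · rw [h0] at hbc; simp at hbc; omega
    · exact h0
  have hc : 0 < c := Nat.pos_of_ne_zero hsq.ne_zero
  obtain ⟨c2, hc2⟩ := Nat.gcd_dvd_left c g
  set c1 := c.gcd g with hc1
  have hc1p : 0 < c1 := Nat.gcd_pos_of_pos_left _ hc
  have hcop : c1.Coprime c2 := by
    rw [hc2] at hsq
    exact (Nat.squarefree_mul_iff.mp hsq).1
  have hsq2 : Squarefree c2 := hsq.squarefree_of_dvd (Dvd.intro_left _ hc2.symm)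
  have hc2b : c2 ∣ b := by
    rw [← Nat.factorization_prime_le_iff_dvd hsq2.ne_zero hb.ne']
    intro p hp
    by_cases hpc : p ∣ c2
    · have h1 : c2.factorization p ≤ 1 := hsq2.natFactorization_le_one p
      have hpcc : p ∣ c := hpc.trans (Dvd.intro_left _ hc2.symm)
      have hpg : ¬ p ∣ g := by
        intro hpg
        have : p ∣ c1 := Nat.dvd_gcd hpcc hpg
        exact Nat.not_coprime_of_dvd_of_dvd hp.one_lt this hpc hcop
      have h2 := h p hp (hbc ▸ hpcc.mul_left _) hpg
      rw [← hbc, pow_two p] at h2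
      have h3 : p ∣ b := hp.dvd_of_dvd_pow (Squarefree.dvd_of_squarefree_of_mul_dvd_mul_left hsq h2)
      exact h1.trans ((hp.dvd_iff_one_le_factorization hb.ne').mp h3)
    · rw [Nat.factorization_eq_zero_of_not_dvd hpc]; exact Nat.zero_le _
  have hc2p : 0 < c2 := Nat.pos_of_ne_zero hsq2.ne_zero
  have hle : c1 ≤ g := Nat.gcd_le_right _ hg
  refine ⟨b * c1, by positivity, ?_, ?_⟩
  · calc (b * c1) ^ 2 = (b ^ 2 * (c1 * 1)) * c1 := by ring
      _ ≤ (b ^ 2 * (c1 * c2)) * g := by gcongr; exact hc2p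
      _ = M * g := by rw [← hc2, hbc]
  · obtain ⟨d, hd⟩ := hc2b
    rw [← hbc, hc2]
    exact ⟨d * c1 ^ 2, by rw [show (b * c1) ^ 3 = b ^ 2 * b * c1 ^ 3 by ring]; nth_rw 2 [hd]; ring⟩

lemma dvd_prod_gcd {ι : Type} (s : Finset ι) (y : ι → ℕ) (b : ℕ) :
    b ∣ ∏ j ∈ s, y j → b ∣ ∏ j ∈ s, b.gcd (y j) := by
  have key : b.gcd (∏ j ∈ s, y j) ∣ ∏ j ∈ s, b.gcd (y j) := by
    classical
    induction s using Finset.induction_on with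
    | empty => simp
    | insert a s ha ih =>
      rw [Finset.prod_insert ha, Finset.prod_insert ha]
      exact (Nat.gcd_mul_right_dvd_mul_gcd _ _ _).trans (mul_dvd_mul_left _ ih)
  intro h
  rwa [Nat.gcd_eq_left h] at key

lemma core_tuple {ι : Type} [Fintype ι] [DecidableEq ι] (y : ι → ℕ) (H : ℝ) (hH : 1 ≤ H)
    (hcard : 2 ≤ Fintype.card ι)
    (hy : ∀ i, 0 < y i) (hyH : ∀ i, (y i : ℝ) ≤ H)
    (hdvd : ∀ i, y i ∣ ∏ j ∈ Finset.univ.erase i, y j) :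
    ∃ i j, i ≠ j ∧ ∃ (g : ℕ) (w : ι → ℕ), 0 < g ∧ y i = g * w i ∧ y j = g * w j ∧
      (∀ k, k ≠ i → k ≠ j → w k = y k) ∧
      ∃ a : ℕ, 0 < a ∧ (∀ k, w k ∣ a ^ 3) ∧
       (a : ℝ) ≤ H ^ ((Fintype.card ι : ℝ) / 2 - 1 / (2 * Fintype.card ι - 2)) := by
  set n := Fintype.card ι with hn
  have hne : Nonempty ι := Fintype.card_pos_iff.mp (by omega)
  obtain ⟨i, -, hi⟩ := Finset.exists_max_image (Finset.univ : Finset ι) y Finset.univ_nonempty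
  have hce : (Finset.univ.erase i).card = n - 1 := by
    rw [Finset.card_erase_of_mem (Finset.mem_univ _), Finset.card_univ]
  obtain ⟨j, hj, hjm⟩ := Finset.exists_max_image (Finset.univ.erase i)
    (fun j => (y i).gcd (y j)) (Finset.card_pos.mp (by omega))
  have hij : j ≠ i := Finset.ne_of_mem_erase hj
  set g := (y i).gcd (y j) with hg
  have hgp : 0 < g := Nat.gcd_pos_of_pos_left _ (hy i)
  have hYg : y i ≤ g ^ (n - 1) := by
    calc y i ≤ ∏ j ∈ Finset.univ.erase i, (y i).gcd (y j) :=
          Nat.le_of_dvd (Finset.prod_pos fun k _ => Nat.gcd_pos_of_pos_left _ (hy i))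
            (dvd_prod_gcd _ _ _ (hdvd i))
      _ ≤ g ^ (Finset.univ.erase i).card := Finset.prod_le_pow_card _ _ _ hjm
      _ = _ := by rw [hce]
  obtain ⟨u, hu⟩ := Nat.gcd_dvd_left (y i) (y j)
  obtain ⟨v, hv⟩ := Nat.gcd_dvd_right (y i) (y j)
  rw [← hg] at hu hv
  set w : ι → ℕ := Function.update (Function.update y i u) j v with hw
  have hwi : w i = u := by simp [hw, hij.symm]
  have hwj : w j = v := by simp [hw]
  have hwk : ∀ k, k ≠ i → k ≠ j → w k = y k := by
    intro k h1 h2; simp [hw, h1, h2]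
  have hprod : ∏ k, y k = g ^ 2 * ∏ k, w k := by
    rw [← Finset.mul_prod_erase Finset.univ y (Finset.mem_univ i),
      ← Finset.mul_prod_erase _ y hj,
      ← Finset.mul_prod_erase Finset.univ w (Finset.mem_univ i),
      ← Finset.mul_prod_erase _ w hj, hwi, hwj]
    nth_rw 1 [hu, hv]
    have : ∏ x ∈ (Finset.univ.erase i).erase j, y x = ∏ x ∈ (Finset.univ.erase i).erase j, w x := by
      apply Finset.prod_congr rfl
      intro k hk
      simp only [Finset.mem_erase] at hk
      exact (hwk k hk.2.1 hk.1).symm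
    rw [this]; ring
  have hMp : 0 < ∏ k, w k := by
    have : 0 < ∏ k, y k := Finset.prod_pos fun k _ => hy k
    rw [hprod] at this
    exact Nat.pos_of_mul_pos_left this
  obtain ⟨a, ha0, ha1, ha2⟩ := core_a (∏ k, w k) g hMp hgp (by
    intro p hp hpM hpg
    have hpy : p ∣ ∏ k, y k := hprod ▸ hpM.mul_left _
    obtain ⟨k, -, hk⟩ := (hp.prime.dvd_finsetProd_iff _).mp hpy
    have h2 : p ^ 2 ∣ ∏ k, y k := by
      rw [← Finset.mul_prod_erase Finset.univ y (Finset.mem_univ k), pow_two]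
      exact mul_dvd_mul hk (hk.trans (hdvd k))
    rw [hprod] at h2
    have hc : (p ^ 2).Coprime (g ^ 2) :=
      Nat.Coprime.pow _ _ ((Nat.Prime.coprime_iff_not_dvd hp).mpr hpg)
    exact hc.dvd_of_dvd_mul_left h2)
  refine ⟨i, j, hij.symm, g, w, hgp, by rw [hwi]; exact hu, by rw [hwj]; exact hv, hwk, a, ha0,
    fun k => (Finset.dvd_prod_of_mem w (Finset.mem_univ k)).trans ha2, ?_⟩
  have hPY : ∏ k, y k ≤ y i ^ n := by
    have := Finset.prod_le_pow_card Finset.univ y (y i) (fun k hk => hi k hk)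
    rwa [Finset.card_univ] at this
  have h1 : a ^ 2 * g ≤ y i ^ n := by
    calc a ^ 2 * g ≤ ((∏ k, w k) * g) * g := by gcongr
      _ = ∏ k, y k := by rw [hprod]; ring
      _ ≤ _ := hPY
  have h2 : (a ^ 2) ^ (n - 1) * y i ≤ y i ^ (n * (n - 1)) := by
    calc (a ^ 2) ^ (n - 1) * y i ≤ (a ^ 2) ^ (n - 1) * g ^ (n - 1) := by gcongr
      _ = (a ^ 2 * g) ^ (n - 1) := by rw [mul_pow]
      _ ≤ (y i ^ n) ^ (n - 1) := by gcongr
      _ = _ := by rw [← pow_mul]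
  have hnn : 1 ≤ n * (n - 1) := Nat.mul_pos (by omega) (by omega)
  have h3 : a ^ (2 * (n - 1)) ≤ y i ^ (n * (n - 1) - 1) := by
    have : y i ^ (n * (n - 1)) = y i ^ (n * (n - 1) - 1) * y i := by
      rw [← pow_succ]; congr 1; omega
    rw [this, ← pow_mul] at h2
    exact Nat.le_of_mul_le_mul_right h2 (hy i)
  have h4 : (a : ℝ) ^ (2 * (n - 1)) ≤ H ^ (n * (n - 1) - 1) := by
    calc (a : ℝ) ^ (2 * (n - 1)) ≤ (y i : ℝ) ^ (n * (n - 1) - 1) := by exact_mod_cast h3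
      _ ≤ _ := by gcongr; exact hyH i
  have hn1 : ((n - 1 : ℕ) : ℝ) = n - 1 := by rw [Nat.cast_sub (by omega)]; simp
  have hn2 : (2 : ℝ) ≤ n := by exact_mod_cast hcard
  refine le_of_pow_le_pow_left₀ (n := 2 * (n - 1)) (by omega) (by positivity) (h4.trans_eq ?_)
  rw [← Real.rpow_natCast, ← Real.rpow_natCast, ← Real.rpow_mul (by positivity)]
  congr 1
  rw [Nat.cast_sub hnn]
  push_cast
  rw [hn1]
  have : (n : ℝ) - 1 ≠ 0 := by linarith
  have : (2 : ℝ) * n - 2 ≠ 0 := by linarith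
  field_simp

/-- The solution set. -/
def Sol {ι : Type} [Fintype ι] (H : ℝ) (Q₀ : ℤ) (Q : ι → ℤ) : Set (ι → ℤ) :=
  {x | (∀ i, x i ≠ 0 ∧ |(x i : ℝ)| ≤ H) ∧ ∑ i, (Q i : ℚ) / (x i : ℚ) = (Q₀ : ℚ)}

/-- The set of possible code entries. -/
def DD (T K V b : ℕ) : Finset ℤ :=
  ((({1, -1} : Finset ℤ) ×ˢ Finset.range (T + 1)) ×ˢ (V.divisors ×ˢ b.divisors)).image
    (fun q => q.1.1 * ((q.1.2 ^ K * q.2.1 * q.2.2 : ℕ) : ℤ))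

lemma DD_card (T K V b : ℕ) :
    (DD T K V b).card ≤ 2 * (T + 1) * (V.divisors.card * b.divisors.card) := by
  refine Finset.card_image_le.trans ?_
  rw [Finset.card_product, Finset.card_product, Finset.card_product, Finset.card_range]
  simp

lemma mem_DD {T K V b : ℕ} (hV : V ≠ 0) (hb : b ≠ 0) {t r w : ℕ} (ht : t ≤ T) (hr : r ∣ V)
    (hw : w ∣ b) (z : ℤ) (hz : z.natAbs = t ^ K * r * w) : z ∈ DD T K V b := by
  unfold DD
  rw [Finset.mem_image]
  rcases Int.natAbs_eq z with h | h
  · refine ⟨((1, t), (r, w)), ?_, ?_⟩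
    · simp only [Finset.mem_product, Finset.mem_range, Nat.mem_divisors]
      exact ⟨⟨by simp, by omega⟩, ⟨hr, hV⟩, ⟨hw, hb⟩⟩
    · simp only; rw [← hz, one_mul]; exact h.symm
  · refine ⟨((-1, t), (r, w)), ?_, ?_⟩
    · simp only [Finset.mem_product, Finset.mem_range, Nat.mem_divisors]
      exact ⟨⟨by simp, by omega⟩, ⟨hr, hV⟩, ⟨hw, hb⟩⟩
    · simp only; rw [← hz, neg_one_mul]; exact h.symm

lemma DD_bound (E A η : ℝ) (hE : 0 < E) (hA : 0 < A) (hη : 0 < η) :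
    ∃ K : ℕ, 0 < K ∧ ∃ C : ℝ, 1 ≤ C ∧ ∀ H : ℝ, 1 ≤ H → ∀ W a : ℕ, W ≠ 0 → a ≠ 0 →
      (W : ℝ) ≤ H ^ A → (a : ℝ) ≤ H ^ E →
      ((DD ⌊H ^ (1 / (K : ℝ))⌋₊ K (W ^ K) (a ^ 3)).card : ℝ) ≤ C * H ^ η := by
  set K : ℕ := ⌈3 / η⌉₊ + 1 with hK
  have hK0 : 0 < K := by omega
  have hKr : (0 : ℝ) < K := by exact_mod_cast hK0
  have hK3 : 1 / (K : ℝ) ≤ η / 3 := by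
    have : 3 / η ≤ K := by
      rw [hK]; push_cast; exact (Nat.le_ceil _).trans (by linarith)
    rw [div_le_iff₀ hη] at this
    rw [div_le_div_iff₀ hKr (by norm_num)]
    linarith
  obtain ⟨C1, hC1, h1⟩ := div_bound (η / (3 * A * K)) (by positivity)
  obtain ⟨C2, hC2, h2⟩ := div_bound (η / (9 * E)) (by positivity)
  refine ⟨K, hK0, 4 * C1 * C2, by nlinarith, ?_⟩
  intro H hH W a hW ha hWH haH
  have hHp : 0 < H := by linarith
  have b1 : ((⌊H ^ (1 / (K : ℝ))⌋₊ : ℝ) + 1) ≤ 2 * H ^ (η / 3) := by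
    have e1 : (⌊H ^ (1 / (K : ℝ))⌋₊ : ℝ) ≤ H ^ (1 / (K : ℝ)) := Nat.floor_le (by positivity)
    have e2 : H ^ (1 / (K : ℝ)) ≤ H ^ (η / 3) := Real.rpow_le_rpow_of_exponent_le hH hK3
    have e3 : 1 ≤ H ^ (η / 3) := Real.one_le_rpow hH (by positivity)
    linarith
  have b2 : ((W ^ K).divisors.card : ℝ) ≤ C1 * H ^ (η / 3) := by
    refine (h1 _ (pow_ne_zero _ hW)).trans ?_
    gcongr
    calc ((W ^ K : ℕ) : ℝ) ^ (η / (3 * A * K)) ≤ ((H ^ A) ^ K) ^ (η / (3 * A * K)) := by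
          push_cast; gcongr
      _ = H ^ (η / 3) := by
          rw [← Real.rpow_natCast, ← Real.rpow_mul hHp.le, ← Real.rpow_mul hHp.le]
          congr 1; field_simp
  have b3 : ((a ^ 3).divisors.card : ℝ) ≤ C2 * H ^ (η / 3) := by
    refine (h2 _ (pow_ne_zero _ ha)).trans ?_
    gcongr
    calc ((a ^ 3 : ℕ) : ℝ) ^ (η / (9 * E)) ≤ ((H ^ E) ^ 3) ^ (η / (9 * E)) := by
          push_cast; gcongr
      _ = H ^ (η / 3) := by
          rw [← Real.rpow_natCast, ← Real.rpow_mul hHp.le, ← Real.rpow_mul hHp.le]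
          congr 1; push_cast; field_simp; norm_num
  have hH3 : H ^ η = H ^ (η / 3) * (H ^ (η / 3) * H ^ (η / 3)) := by
    rw [← Real.rpow_add hHp, ← Real.rpow_add hHp]; congr 1; ring
  calc ((DD ⌊H ^ (1 / (K : ℝ))⌋₊ K (W ^ K) (a ^ 3)).card : ℝ)
      ≤ 2 * ((⌊H ^ (1 / (K : ℝ))⌋₊ : ℝ) + 1) *
        (((W ^ K).divisors.card : ℝ) * ((a ^ 3).divisors.card : ℝ)) := by
          exact_mod_cast DD_card _ _ _ _
    _ ≤ 2 * (2 * H ^ (η / 3)) * ((C1 * H ^ (η / 3)) * (C2 * H ^ (η / 3))) := by gcongr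
    _ = _ := by rw [hH3]; ring

lemma sol_dvd {ι : Type} [Fintype ι] [DecidableEq ι] {H : ℝ} {Q₀ : ℤ} {Q : ι → ℤ} {x : ι → ℤ}
    (hx : x ∈ Sol H Q₀ Q) (i : ι) : x i ∣ Q i * ∏ j ∈ Finset.univ.erase i, x j := by
  obtain ⟨h1, h2⟩ := hx
  refine ⟨Q₀ * ∏ j ∈ Finset.univ.erase i, x j -
    ∑ j ∈ Finset.univ.erase i, Q j * ∏ k ∈ (Finset.univ.erase i).erase j, x k, ?_⟩
  have hxi : (x i : ℚ) ≠ 0 := by exact_mod_cast (h1 i).1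
  rw [← Finset.add_sum_erase _ _ (Finset.mem_univ i)] at h2
  have h3 : (Q i : ℚ) = x i * (Q₀ - ∑ j ∈ Finset.univ.erase i, (Q j : ℚ) / x j) := by
    rw [← h2]; field_simp; ring
  have h4 : ∀ j ∈ Finset.univ.erase i, (Q j : ℚ) / x j * ∏ k ∈ Finset.univ.erase i, (x k : ℚ)
      = Q j * ∏ k ∈ (Finset.univ.erase i).erase j, (x k : ℚ) := by
    intro j hj
    rw [← Finset.mul_prod_erase _ _ hj]
    have hxj : (x j : ℚ) ≠ 0 := by exact_mod_cast (h1 j).1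
    field_simp
  have : (Q i : ℚ) * ∏ j ∈ Finset.univ.erase i, (x j : ℚ) =
      x i * (Q₀ * ∏ j ∈ Finset.univ.erase i, (x j : ℚ) -
    ∑ j ∈ Finset.univ.erase i, Q j * ∏ k ∈ (Finset.univ.erase i).erase j, (x k : ℚ)) := by
    rw [← Finset.sum_congr rfl h4, ← Finset.sum_mul, h3]; ring
  exact_mod_cast this

lemma code {ι : Type} [Fintype ι] [DecidableEq ι] {H : ℝ} (hH : 1 ≤ H) {Q₀ : ℤ} {Q : ι → ℤ}
    (hcard : 2 ≤ Fintype.card ι)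
    (hQ : ∀ i, Q i ≠ 0) {x : ι → ℤ} (hx : x ∈ Sol H Q₀ Q) (K : ℕ) (hK : 0 < K) :
    ∃ i j, i ≠ j ∧ ∃ (g : ℕ) (z : ι → ℤ), 0 < g ∧ x i = g * z i ∧ x j = g * z j ∧
      (∀ k, k ≠ i → k ≠ j → x k = z k) ∧
      ∃ a : ℕ, 0 < a ∧
       (a : ℝ) ≤ H ^ ((Fintype.card ι : ℝ) / 2 - 1 / (2 * Fintype.card ι - 2)) ∧
       ∀ k, z k ∈ DD ⌊H ^ (1 / (K : ℝ))⌋₊ K ((∏ i, (Q i).natAbs) ^ K) (a ^ 3) := by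
  set W := ∏ i, (Q i).natAbs with hW
  have hW0 : W ≠ 0 := Finset.prod_ne_zero_iff.mpr fun i _ => Int.natAbs_ne_zero.mpr (hQ i)
  have hx0 : ∀ k, 0 < (x k).natAbs := fun k => Int.natAbs_pos.mpr (hx.1 k).1
  choose s y m h1 h2 h3 using fun k => coprime_part W (x k).natAbs (hx0 k)
  have hs0 : ∀ k, 0 < s k := fun k => Nat.pos_of_mul_pos_right (h1 k ▸ hx0 k)
  have hy0 : ∀ k, 0 < y k := fun k => Nat.pos_of_mul_pos_left (h1 k ▸ hx0 k)
  have hxH : ∀ k, ((x k).natAbs : ℝ) ≤ H := by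
    intro k
    rw [Nat.cast_natAbs, Int.cast_abs]; exact (hx.1 k).2
  choose t r h4 h5 using fun k => kpart W K hK hW0 (s k) (hs0 k) (m k) (h2 k)
  have hyH : ∀ k, (y k : ℝ) ≤ H := by
    intro k
    refine le_trans ?_ (hxH k)
    rw [h1 k]
    exact_mod_cast Nat.le_mul_of_pos_left _ (hs0 k)
  have htT : ∀ k, t k ≤ ⌊H ^ (1 / (K : ℝ))⌋₊ := by
    intro k
    apply Nat.le_floor
    have hr0 : 0 < r k := Nat.pos_of_mul_pos_left (h4 k ▸ hs0 k)
    have : ((t k) ^ K : ℝ) ≤ H := by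
      refine le_trans ?_ (hxH k)
      rw [h1 k, h4 k]
      have := Nat.le_mul_of_pos_right (t k ^ K) (Nat.mul_pos hr0 (hy0 k))
      rw [← mul_assoc] at this
      exact_mod_cast this
    rw [one_div]
    exact (Real.le_rpow_inv_iff_of_pos (by positivity) (by linarith)
      (by exact_mod_cast hK)).mpr (by rwa [Real.rpow_natCast])
  have hdvd : ∀ i, y i ∣ ∏ j ∈ Finset.univ.erase i, y j := by
    intro i
    have e1 := Int.natAbs_dvd_natAbs.mpr (sol_dvd hx i)
    have e0 : (∏ j ∈ Finset.univ.erase i, x j).natAbs = ∏ j ∈ Finset.univ.erase i, (x j).natAbs :=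
      map_prod Int.natAbsHom _ _
    rw [Int.natAbs_mul, e0] at e1
    have e2 : y i ∣ (Q i).natAbs * ∏ j ∈ Finset.univ.erase i, (x j).natAbs :=
      (Dvd.intro_left _ (h1 i).symm).trans e1
    have e3 : (y i).Coprime (Q i).natAbs :=
      (h3 i).coprime_dvd_right (Finset.dvd_prod_of_mem (fun i => (Q i).natAbs) (Finset.mem_univ i))
    have e4 := e3.dvd_of_dvd_mul_left e2
    rw [Finset.prod_congr rfl (fun j _ => h1 j), Finset.prod_mul_distrib] at e4
    refine Nat.Coprime.dvd_of_dvd_mul_left ?_ e4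
    apply Nat.Coprime.prod_right
    intro j _
    exact (Nat.Coprime.pow_right (m j) (h3 i)).coprime_dvd_right (h2 j)
  obtain ⟨i, j, hij, g, w, hg, hwi, hwj, hwk, a, ha, hwa, haH⟩ :=
    core_tuple y H hH hcard hy0 hyH hdvd
  refine ⟨i, j, hij, g, fun k => (x k).sign * ((s k * w k : ℕ) : ℤ), hg, ?_, ?_, ?_, a, ha, haH, ?_⟩
  · conv_lhs => rw [← Int.sign_mul_natAbs (x i), h1 i, hwi]
    push_cast; ring
  · conv_lhs => rw [← Int.sign_mul_natAbs (x j), h1 j, hwj]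
    push_cast; ring
  · intro k hki hkj
    conv_lhs => rw [← Int.sign_mul_natAbs (x k), h1 k, ← hwk k hki hkj]
  · intro k
    refine mem_DD (pow_ne_zero _ hW0) (pow_ne_zero _ ha.ne') (htT k) (h5 k) (hwa k) _ ?_
    rw [Int.natAbs_mul, Int.natAbs_sign_of_ne_zero (hx.1 k).1, one_mul, Int.natAbs_natCast, ← h4 k]

lemma sol_finite {ι : Type} [Fintype ι] (H : ℝ) (Q₀ : ℤ) (Q : ι → ℤ) : (Sol H Q₀ Q).Finite := by
  refine (Set.Finite.pi' (fun _ : ι => Set.finite_Icc (-⌊H⌋) ⌊H⌋)).subset ?_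
  intro x hx i
  have := abs_le.mp (hx.1 i).2
  refine ⟨?_, Int.le_floor.mpr this.2⟩
  have h2 : -x i ≤ ⌊H⌋ := Int.le_floor.mpr (by push_cast; linarith)
  linarith

/-- Solutions with no vanishing pair. -/
def NV {ι : Type} [Fintype ι] (H : ℝ) (Q₀ : ℤ) (Q : ι → ℤ) : Set (ι → ℤ) :=
  {x | x ∈ Sol H Q₀ Q ∧ ∀ i j, i ≠ j → (Q i : ℚ) / x i + Q j / x j ≠ 0}

lemma sum_split {ι : Type} [Fintype ι] [DecidableEq ι] (f : ι → ℚ) {i j : ι} (hij : i ≠ j) :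
    ∑ k, f k = f i + f j + ∑ k ∈ (Finset.univ.erase i).erase j, f k := by
  rw [← Finset.add_sum_erase _ _ (Finset.mem_univ i),
    ← Finset.add_sum_erase (Finset.univ.erase i) _ (Finset.mem_erase.mpr ⟨hij.symm, Finset.mem_univ j⟩)]
  ring

lemma nv_card {ι : Type} [Fintype ι] [DecidableEq ι] {H : ℝ} (hH : 1 ≤ H) {Q₀ : ℤ} {Q : ι → ℤ}
    (hcard : 2 ≤ Fintype.card ι) (hQ : ∀ i, Q i ≠ 0) (K : ℕ) (hK : 0 < K) (L : ℝ)
    (hL : ∀ a : ℕ, a ≠ 0 →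
      (a : ℝ) ≤ H ^ ((Fintype.card ι : ℝ) / 2 - 1 / (2 * Fintype.card ι - 2)) →
      ((DD ⌊H ^ (1 / (K : ℝ))⌋₊ K ((∏ i, (Q i).natAbs) ^ K) (a ^ 3)).card : ℝ) ≤ L) :
    ((NV H Q₀ Q).ncard : ℝ) ≤ (Fintype.card ι : ℝ) ^ 2 *
      H ^ ((Fintype.card ι : ℝ) / 2 - 1 / (2 * Fintype.card ι - 2)) * L ^ (Fintype.card ι) := by
  set θ := ((Fintype.card ι : ℝ) / 2 - 1 / (2 * Fintype.card ι - 2)) with hθ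
  set B : ℕ := ⌊H ^ θ⌋₊ with hB
  set D : ℕ → Finset ℤ := fun a =>
    DD ⌊H ^ (1 / (K : ℝ))⌋₊ K ((∏ i, (Q i).natAbs) ^ K) (a ^ 3) with hD
  set Z : Finset (ι → ℤ) := (Finset.Icc 1 B).biUnion
    (fun a => Fintype.piFinset (fun _ => D a)) with hZ
  have hBle : (B : ℝ) ≤ H ^ θ := Nat.floor_le (by positivity)
  have hZcard : (Z.card : ℝ) ≤ H ^ θ * L ^ (Fintype.card ι) := by
    have e1 : Z.card ≤ ∑ a ∈ Finset.Icc 1 B, (D a).card ^ (Fintype.card ι) := by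
      refine Finset.card_biUnion_le.trans (le_of_eq ?_)
      apply Finset.sum_congr rfl
      intro a _
      rw [Fintype.card_piFinset, Finset.prod_const, Finset.card_univ]
    have e2 : ∀ a ∈ Finset.Icc 1 B, ((D a).card : ℝ) ^ (Fintype.card ι) ≤ L ^ (Fintype.card ι) := by
      intro a ha
      rw [Finset.mem_Icc] at ha
      have : ((D a).card : ℝ) ≤ L := hL a (by omega)
        (le_trans (by exact_mod_cast ha.2) hBle)
      gcongr
    calc (Z.card : ℝ) ≤ ∑ a ∈ Finset.Icc 1 B, ((D a).card : ℝ) ^ (Fintype.card ι) := by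
          exact_mod_cast e1
      _ ≤ ∑ a ∈ Finset.Icc 1 B, L ^ (Fintype.card ι) := Finset.sum_le_sum e2
      _ = B * L ^ (Fintype.card ι) := by simp
      _ ≤ _ := by
        have hL0 : 0 ≤ L := le_trans (Nat.cast_nonneg _) (hL 1 one_ne_zero (by
          rw [Nat.cast_one]
          apply Real.one_le_rpow hH
          have h2 : (2 : ℝ) ≤ Fintype.card ι := by exact_mod_cast hcard
          rw [hθ, sub_nonneg, div_le_div_iff₀ (by linarith) (by norm_num)]
          nlinarith))
        gcongr
  have hex : ∀ x : ι → ℤ, ∃ c : (ι × ι) × (ι → ℤ), x ∈ NV H Q₀ Q →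
      c.1.1 ≠ c.1.2 ∧ c.2 ∈ Z ∧ (∀ k, k ≠ c.1.1 → k ≠ c.1.2 → x k = c.2 k) ∧
      ∃ g : ℕ, 0 < g ∧ x c.1.1 = g * c.2 c.1.1 ∧ x c.1.2 = g * c.2 c.1.2 := by
    intro x
    by_cases hx : x ∈ NV H Q₀ Q
    · obtain ⟨i, j, hij, g, z, hg, hi, hj, hk, a, ha, haH, hz⟩ := code hH hcard hQ hx.1 K hK
      refine ⟨((i, j), z), fun _ => ⟨hij, ?_, hk, g, hg, hi, hj⟩⟩
      rw [hZ, Finset.mem_biUnion]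
      exact ⟨a, Finset.mem_Icc.mpr ⟨ha, Nat.le_floor haH⟩, Fintype.mem_piFinset.mpr hz⟩
    · obtain ⟨i⟩ : Nonempty ι := Fintype.card_pos_iff.mp (by omega)
      exact ⟨((i, i), x), fun h => absurd h hx⟩
  choose c hc using hex
  have hmain : (NV H Q₀ Q).ncard ≤
      (((Finset.univ : Finset (ι × ι)) ×ˢ Z : Finset ((ι × ι) × (ι → ℤ))) :
        Set ((ι × ι) × (ι → ℤ))).ncard := by
    refine Set.ncard_le_ncard_of_injOn c ?_ ?_ (Finset.finite_toSet _)
    · intro x hx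
      simp only [Finset.coe_product, Finset.coe_univ, Set.mem_prod, Set.mem_univ, true_and]
      exact (hc x hx).2.1
    · intro x hx x' hx' hcc
      obtain ⟨hij, -, hk, g, hg, hi, hj⟩ := hc x hx
      obtain ⟨-, -, hk', g', hg', hi', hj'⟩ := hc x' hx'
      rw [← hcc] at hk' hi' hj'
      generalize c x = d at *
      obtain ⟨⟨i, j⟩, z⟩ := d
      simp only at *
      have s1 := hx.1.2
      have s2 := hx'.1.2
      rw [sum_split _ hij] at s1 s2
      have hrest : ∑ k ∈ (Finset.univ.erase i).erase j, (Q k : ℚ) / x k =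
          ∑ k ∈ (Finset.univ.erase i).erase j, (Q k : ℚ) / x' k := by
        apply Finset.sum_congr rfl
        intro k hkm
        simp only [Finset.mem_erase] at hkm
        rw [hk k hkm.2.1 hkm.1, hk' k hkm.2.1 hkm.1]
      have h12 : (Q i : ℚ) / x i + Q j / x j = (Q i : ℚ) / x' i + Q j / x' j := by linarith
      have hne := hx.2 i j hij
      have hgq : (g : ℚ) ≠ 0 := by exact_mod_cast hg.ne'
      have hgq' : (g' : ℚ) ≠ 0 := by exact_mod_cast hg'.ne'
      have f1 : (Q i : ℚ) / x i + Q j / x j = ((Q i : ℚ) / z i + Q j / z j) / g := by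
        rw [hi, hj]; push_cast
        rw [add_div, div_div, div_div, mul_comm (g : ℚ), mul_comm (g : ℚ)]
      have f2 : (Q i : ℚ) / x' i + Q j / x' j = ((Q i : ℚ) / z i + Q j / z j) / g' := by
        rw [hi', hj']; push_cast
        rw [add_div, div_div, div_div, mul_comm (g' : ℚ), mul_comm (g' : ℚ)]
      rw [f1] at hne
      have hβ : ((Q i : ℚ) / z i + Q j / z j) ≠ 0 := fun h => hne (by rw [h, zero_div])
      rw [f1, f2] at h12
      have hgg : (g : ℚ) = g' := by
        rw [div_eq_div_iff hgq hgq'] at h12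
        exact (mul_left_cancel₀ hβ h12).symm
      have hgg' : g = g' := by exact_mod_cast hgg
      funext k
      by_cases h1 : k = i
      · rw [h1, hi, hi', hgg']
      · by_cases h2 : k = j
        · rw [h2, hj, hj', hgg']
        · rw [hk k h1 h2, hk' k h1 h2]
  rw [Set.ncard_coe_finset, Finset.card_product, Finset.card_univ, Fintype.card_prod] at hmain
  calc ((NV H Q₀ Q).ncard : ℝ) ≤ (Fintype.card ι : ℝ) * Fintype.card ι * Z.card := by
        exact_mod_cast hmain
    _ ≤ (Fintype.card ι : ℝ) * Fintype.card ι * (H ^ θ * L ^ (Fintype.card ι)) := by gcongr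
    _ = _ := by ring

lemma van_card {ι : Type} [Fintype ι] [DecidableEq ι] {H : ℝ} (hH : 1 ≤ H) {Q₀ : ℤ} {Q : ι → ℤ}
    (hQ : ∀ i, Q i ≠ 0) {i j : ι} (hij : i ≠ j) :
    ({x | x ∈ Sol H Q₀ Q ∧ (Q i : ℚ) / x i + Q j / x j = 0}.ncard : ℝ) ≤
      3 * H * (Sol H Q₀ (fun k : {k // k ≠ i ∧ k ≠ j} => Q k)).ncard := by
  have h1 : {x | x ∈ Sol H Q₀ Q ∧ (Q i : ℚ) / x i + Q j / x j = 0}.ncard ≤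
      ((Set.Icc (-⌊H⌋) ⌊H⌋) ×ˢ (Sol H Q₀ (fun k : {k // k ≠ i ∧ k ≠ j} => Q k))).ncard := by
    refine Set.ncard_le_ncard_of_injOn (fun x => (x i, fun k : {k // k ≠ i ∧ k ≠ j} => x k)) ?_ ?_
      ((Set.finite_Icc _ _).prod (sol_finite _ _ _))
    · rintro x ⟨hx, hv⟩
      refine ⟨?_, ?_, ?_⟩
      · have := abs_le.mp (hx.1 i).2
        refine ⟨?_, Int.le_floor.mpr this.2⟩
        have h2 : -x i ≤ ⌊H⌋ := Int.le_floor.mpr (by push_cast; linarith)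
        simp only
        linarith
      · intro k; exact hx.1 k
      · have := hx.2
        rw [sum_split _ hij, hv, zero_add] at this
        rw [← this]
        symm
        apply Finset.sum_subtype (f := fun k => (Q k : ℚ) / x k)
        intro k
        simp [and_comm]
    · rintro x ⟨hx, hv⟩ x' ⟨hx', hv'⟩ he
      simp only [Prod.mk.injEq] at he
      obtain ⟨he1, he2⟩ := he
      funext k
      by_cases h1 : k = i
      · rw [h1, he1]
      · by_cases h2 : k = j
        · rw [h2]
          rw [he1] at hv
          have e : (Q j : ℚ) / x j = Q j / x' j := by linarith
          have hj : (x j : ℚ) ≠ 0 := by exact_mod_cast (hx.1 j).1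
          have hj' : (x' j : ℚ) ≠ 0 := by exact_mod_cast (hx'.1 j).1
          have hq : (Q j : ℚ) ≠ 0 := by exact_mod_cast hQ j
          rw [div_eq_div_iff hj hj'] at e
          have := mul_left_cancel₀ hq e
          exact_mod_cast this.symm
        · exact congrFun he2 ⟨k, h1, h2⟩
  rw [Set.ncard_prod] at h1
  have h2 : ((Set.Icc (-⌊H⌋) ⌊H⌋).ncard : ℝ) ≤ 3 * H := by
    rw [← Finset.coe_Icc, Set.ncard_coe_finset, Int.card_Icc]
    have h0 : 0 ≤ ⌊H⌋ := Int.floor_nonneg.mpr (by linarith)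
    have e : ((⌊H⌋ + 1 - -⌊H⌋).toNat : ℤ) = 2 * ⌊H⌋ + 1 := by
      rw [Int.toNat_of_nonneg (by linarith)]; ring
    have e' : ((⌊H⌋ + 1 - -⌊H⌋).toNat : ℝ) = 2 * ⌊H⌋ + 1 := by exact_mod_cast e
    rw [e']
    have := Int.floor_le H
    linarith
  calc _ ≤ ((Set.Icc (-⌊H⌋) ⌊H⌋).ncard : ℝ) *
        (Sol H Q₀ (fun k : {k // k ≠ i ∧ k ≠ j} => Q k)).ncard := by exact_mod_cast h1
    _ ≤ _ := by gcongr

theorem main_bound (m : ℕ) : ∀ σ : ℝ, 0 ≤ σ → σ ≤ 1 / 2 → σ * (2 * m - 2) ≤ 1 →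
    ∀ A ε : ℝ, 0 < A → 0 < ε → ∃ C : ℝ, 0 ≤ C ∧
    ∀ (ι : Type) [Fintype ι] [DecidableEq ι], Fintype.card ι = m → ∀ H : ℝ, 1 ≤ H →
    ∀ (Q₀ : ℤ) (Q : ι → ℤ), Q₀ ≠ 0 → (∀ i, Q i ≠ 0) → (∀ i, |(Q i : ℝ)| ≤ H ^ A) →
    ((Sol H Q₀ Q).ncard : ℝ) ≤ C * H ^ ((m : ℝ) / 2 - σ + ε) := by
  induction m using Nat.strong_induction_on with
  | _ m ih =>
  intro σ hσ0 hσ1 hσ2 A ε hA hε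
  rcases Nat.lt_or_ge m 2 with hm | hm
  · refine ⟨1, zero_le_one, ?_⟩
    intro ι _ _ hcard H hH Q₀ Q hQ₀ hQ hQH
    have hsub : (Sol H Q₀ Q).ncard ≤ m := by
      obtain rfl | rfl : m = 0 ∨ m = 1 := by omega
      · have : IsEmpty ι := Fintype.card_eq_zero_iff.mp hcard
        have : Sol H Q₀ Q = ∅ := by
          ext x
          simp only [Sol, Set.mem_ofPred_eq, Set.mem_empty_iff_false, iff_false]
          rintro ⟨-, h⟩
          rw [Finset.univ_eq_empty, Finset.sum_empty] at h
          exact hQ₀ (by exact_mod_cast h.symm)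
        rw [this]; simp
      · obtain ⟨i, hi⟩ := Fintype.card_eq_one_iff.mp hcard
        have : Subsingleton ι := ⟨fun a b => (hi a).trans (hi b).symm⟩
        rw [Set.ncard_le_one (sol_finite _ _ _)]
        intro x hx x' hx'
        have s1 := hx.2
        have s2 := hx'.2
        rw [Fintype.sum_subsingleton _ i] at s1 s2
        rw [← s2] at s1
        have hj : (x i : ℚ) ≠ 0 := by exact_mod_cast (hx.1 i).1
        have hj' : (x' i : ℚ) ≠ 0 := by exact_mod_cast (hx'.1 i).1
        have hq : (Q i : ℚ) ≠ 0 := by exact_mod_cast hQ i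
        rw [div_eq_div_iff hj hj'] at s1
        have := mul_left_cancel₀ hq s1
        funext k
        rw [hi k]
        exact_mod_cast this.symm
    rw [one_mul]
    obtain rfl | rfl : m = 0 ∨ m = 1 := by omega
    · rw [Nat.le_zero.mp hsub]; rw [Nat.cast_zero]; positivity
    · calc ((Sol H Q₀ Q).ncard : ℝ) ≤ 1 := by exact_mod_cast hsub
        _ ≤ _ := Real.one_le_rpow hH (by push_cast; linarith)
  · have hm2 : (2 : ℝ) ≤ m := by exact_mod_cast hm
    have hmp : (0 : ℝ) < m := by linarith
    obtain ⟨K, hK, C1, hC1, h1⟩ := DD_bound m (A * m) (ε / m) hmp (by positivity) (by positivity)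
    have hcast : ((m - 2 : ℕ) : ℝ) = m - 2 := by rw [Nat.cast_sub hm]; simp
    obtain ⟨C2, hC2, h2⟩ := ih (m - 2) (by omega) σ hσ0 hσ1 (by rw [hcast]; nlinarith) A ε hA hε
    refine ⟨(m : ℝ) ^ 2 * C1 ^ m + (m : ℝ) ^ 2 * (3 * C2), by positivity, ?_⟩
    intro ι _ _ hcard H hH Q₀ Q hQ₀ hQ hQH
    have hHp : 0 < H := by linarith
    set θ := (m : ℝ) / 2 - 1 / (2 * m - 2) with hθ
    have hσθ : θ ≤ m / 2 - σ := by
      rw [hθ]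
      have : σ ≤ 1 / (2 * m - 2) := by rw [le_div_iff₀ (by linarith)]; exact hσ2
      linarith
    have hNV : ((NV H Q₀ Q).ncard : ℝ) ≤ (m : ℝ) ^ 2 * C1 ^ m * H ^ ((m : ℝ) / 2 - σ + ε) := by
      have e := nv_card (Q₀ := Q₀) hH (by rw [hcard]; exact hm) hQ K hK (C1 * H ^ (ε / m)) (by
        intro a ha haH
        apply h1 H hH _ a (Finset.prod_ne_zero_iff.mpr fun i _ => Int.natAbs_ne_zero.mpr (hQ i)) ha
        · rw [Real.rpow_mul hHp.le, Real.rpow_natCast, ← hcard]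
          push_cast
          calc ∏ i, ((Q i).natAbs : ℝ) ≤ ∏ i : ι, H ^ A := by
                apply Finset.prod_le_prod
                · intros; positivity
                · intro i _; rw [Nat.cast_natAbs, Int.cast_abs]; exact hQH i
            _ = _ := by simp
        · refine haH.trans (Real.rpow_le_rpow_of_exponent_le hH ?_)
          rw [hcard]
          have : 0 < 1 / (2 * (m : ℝ) - 2) := by apply one_div_pos.mpr; linarith
          linarith)
      rw [hcard, ← hθ] at e
      refine e.trans ?_
      have : (C1 * H ^ (ε / m)) ^ m = C1 ^ m * H ^ ε := by
        rw [mul_pow, ← Real.rpow_natCast (H ^ (ε / m)), ← Real.rpow_mul hHp.le,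
          div_mul_cancel₀ _ hmp.ne']
      rw [this]
      calc (m : ℝ) ^ 2 * H ^ θ * (C1 ^ m * H ^ ε) = (m : ℝ) ^ 2 * C1 ^ m * H ^ (θ + ε) := by
            rw [Real.rpow_add hHp]; ring
        _ ≤ _ := by
            gcongr
    have hV : ∀ i j : ι, i ≠ j →
        ({x | x ∈ Sol H Q₀ Q ∧ (Q i : ℚ) / x i + Q j / x j = 0}.ncard : ℝ) ≤
        3 * C2 * H ^ ((m : ℝ) / 2 - σ + ε) := by
      intro i j hij
      refine (van_card hH hQ hij).trans ?_
      have hc : Fintype.card {k // k ≠ i ∧ k ≠ j} = m - 2 := by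
        rw [Fintype.card_subtype]
        have : (Finset.univ.filter fun k => k ≠ i ∧ k ≠ j) = (Finset.univ.erase i).erase j := by
          ext k; simp [and_comm]
        rw [this, Finset.card_erase_of_mem (Finset.mem_erase.mpr ⟨hij.symm, Finset.mem_univ j⟩),
          Finset.card_erase_of_mem (Finset.mem_univ i), Finset.card_univ, hcard]
        omega
      have e := h2 {k // k ≠ i ∧ k ≠ j} hc H hH Q₀ (fun k => Q k) hQ₀ (fun k => hQ k)
        (fun k => hQH k)
      calc 3 * H * ((Sol H Q₀ (fun k : {k // k ≠ i ∧ k ≠ j} => Q k)).ncard : ℝ)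
          ≤ 3 * H * (C2 * H ^ (((m - 2 : ℕ) : ℝ) / 2 - σ + ε)) := by gcongr
        _ = 3 * C2 * H ^ ((m : ℝ) / 2 - σ + ε) := by
            have : (m : ℝ) / 2 - σ + ε = (((m - 2 : ℕ) : ℝ) / 2 - σ + ε) + 1 := by
              rw [hcast]; ring
            rw [this, Real.rpow_add hHp _ 1, Real.rpow_one]; ring
    have hsub : Sol H Q₀ Q ⊆ NV H Q₀ Q ∪ ⋃ q ∈ (Finset.univ : Finset ι).offDiag,
        {x | x ∈ Sol H Q₀ Q ∧ (Q q.1 : ℚ) / x q.1 + Q q.2 / x q.2 = 0} := by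
      intro x hx
      by_cases h : ∀ i j, i ≠ j → (Q i : ℚ) / x i + Q j / x j ≠ 0
      · exact Or.inl ⟨hx, h⟩
      · push Not at h
        obtain ⟨i, j, hij, h⟩ := h
        right
        simp only [Set.mem_iUnion]
        exact ⟨(i, j), by simp [hij], hx, h⟩
    have hfin : (NV H Q₀ Q ∪ ⋃ q ∈ (Finset.univ : Finset ι).offDiag,
        {x | x ∈ Sol H Q₀ Q ∧ (Q q.1 : ℚ) / x q.1 + Q q.2 / x q.2 = 0}).Finite := by
      refine (sol_finite H Q₀ Q).subset ?_
      rintro x (hx | hx)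
      · exact hx.1
      · simp only [Set.mem_iUnion] at hx
        obtain ⟨q, -, hx, -⟩ := hx
        exact hx
    have hU := (Set.ncard_le_ncard hsub hfin).trans ((Set.ncard_union_le _ _).trans
      (Nat.add_le_add_left (Finset.set_ncard_biUnion_le _ _) _))
    have hS : ∑ q ∈ (Finset.univ : Finset ι).offDiag,
        ({x | x ∈ Sol H Q₀ Q ∧ (Q q.1 : ℚ) / x q.1 + Q q.2 / x q.2 = 0}.ncard : ℝ) ≤
        (m : ℝ) ^ 2 * (3 * C2 * H ^ ((m : ℝ) / 2 - σ + ε)) := by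
      refine (Finset.sum_le_card_nsmul _ _ (3 * C2 * H ^ ((m : ℝ) / 2 - σ + ε)) ?_).trans ?_
      · intro q hq
        exact hV q.1 q.2 (Finset.mem_offDiag.mp hq).2.2
      · rw [nsmul_eq_mul]
        gcongr
        rw [Finset.offDiag_card, Finset.card_univ, hcard, pow_two]
        exact_mod_cast Nat.sub_le _ _
    calc ((Sol H Q₀ Q).ncard : ℝ) ≤ (NV H Q₀ Q).ncard + ∑ q ∈ (Finset.univ : Finset ι).offDiag,
        ({x | x ∈ Sol H Q₀ Q ∧ (Q q.1 : ℚ) / x q.1 + Q q.2 / x q.2 = 0}.ncard : ℝ) := by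
          exact_mod_cast hU
      _ ≤ (m : ℝ) ^ 2 * C1 ^ m * H ^ ((m : ℝ) / 2 - σ + ε) +
          (m : ℝ) ^ 2 * (3 * C2 * H ^ ((m : ℝ) / 2 - σ + ε)) := add_le_add hNV hS
      _ = _ := by ring

theorem stmt19 (n : ℕ) (hn : n ≥ 4) (A : ℝ) (hA : A > 0) :
    ∀ ε > (0 : ℝ), ∃ C : ℝ, ∀ H : ℝ, H ≥ 2 →
      ∀ Q₀ : ℤ, ∀ Q : Fin n → ℤ,
      Q₀ ≠ 0 → (∀ i, Q i ≠ 0) →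
      (|Q₀| : ℝ) ≤ H ^ A → (∀ i, (|Q i| : ℝ) ≤ H ^ A) →
      (Set.ncard {x : Fin n → ℤ |
          (∀ i, x i ≠ 0 ∧ (|x i| : ℝ) ≤ H) ∧
          ∑ i, (Q i : ℚ) / (x i : ℚ) = (Q₀ : ℚ)} : ℝ) ≤
        C * H ^ ((n : ℝ) / 2 - 1 / (2 * n - 2) + ε) := by
  intro ε hε
  have hn4 : (4 : ℝ) ≤ n := by exact_mod_cast hn
  obtain ⟨C, -, hC⟩ := main_bound n (1 / (2 * n - 2))
    (one_div_nonneg.mpr (by linarith))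
    (one_div_le_one_div_of_le (by norm_num) (by linarith))
    (by rw [one_div_mul_cancel (by linarith)]) A ε hA hε
  refine ⟨C, ?_⟩
  intro H hH Q₀ Q hQ₀ hQ _ hQH
  exact hC (Fin n) (by simp) H (by linarith) Q₀ Q hQ₀ hQ hQH
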